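/- Suppose at least one of the following holds: there exists x ∈ K with σ₁(σ₃(x)) ≠ x; or σ₂ ∘ σ₄ ≠ id; or for every v ∈ K there exists x ∈ K with σ₃(c)·σ₃(σ₁(x))·σ₃(σ₂(v)) ≠ x·σ₄(c)·σ₄(σ₁(v)). Then an element (k,m) of Cay(K,c,σ₁,σ₂,σ₃,σ₄) lies in the middle nucleus (i.e., (z·(k,m))·w = z·((k,m)·w) for all z, w in the algebra) if and only if m = 0 and σ₃⁻¹(σ₂⁻¹(σ₁(σ₄(k)))) = k; that is, the middle nucleus equals Fix(σ₃⁻¹ ∘ σ₂⁻¹ ∘ σ₁ ∘ σ₄) × {0}. -/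

import Mathlib

/-- Multiplication of the generalized Cayley–Dickson double
`Cay(K, c, σ₁, σ₂, σ₃, σ₄)`:
`(u,v)·(x,y) = (u·x + c·σ₁(v)·σ₂(y), σ₃(u)·y + v·σ₄(x))`. -/
def cayMul {R : Type*} [Ring R] (c : R) (σ₁ σ₂ σ₃ σ₄ : R → R) :
    R × R → R × R → R × R :=
  fun p q => (p.1 * q.1 + c * σ₁ p.2 * σ₂ q.2, σ₃ p.1 * q.2 + p.2 * σ₄ q.1)

/-!
The associator `(z·(k,m))·w - z·((k,m)·w)` of `z = (a,b)` and `w = (x,y)` has first component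
`c σ₁(b) σ₂(m) (x - σ₂σ₄(x)) + (c σ₁σ₃(a) - a c) σ₁(m) σ₂(y) + c σ₁(b) (σ₁σ₄(k) - σ₂σ₃(k)) σ₂(y)`.
Choosing `z` and `w` among elements with a zero coordinate separates the three summands. Without
zero divisors, the last one forces `σ₁σ₄(k) = σ₂σ₃(k)`, while a nonzero `m` can be cancelled from
the other two and from the second component, leaving identities in `z` and `w` alone.
-/

/-- The middle nucleus of a binary operation, given as a function since `cayMul` puts a
nonstandard product on `R × R`. -/
def middleNucleus {A : Type*} (mul : A → A → A) : Set A :=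
  {z | ∀ a b, mul (mul a z) b = mul a (mul z b)}

section CayMul

variable {R G : Type*} [Ring R] [FunLike G R R] [RingHomClass G R R]

theorem cayMul_associator (c : R) (σ₁ σ₂ σ₃ σ₄ : G) (a b k m x y : R) :
    cayMul c σ₁ σ₂ σ₃ σ₄ (cayMul c σ₁ σ₂ σ₃ σ₄ (a, b) (k, m)) (x, y) -
        cayMul c σ₁ σ₂ σ₃ σ₄ (a, b) (cayMul c σ₁ σ₂ σ₃ σ₄ (k, m) (x, y)) =
      (c * σ₁ b * σ₂ m * (x - σ₂ (σ₄ x)) + (c * σ₁ (σ₃ a) - a * c) * σ₁ m * σ₂ y +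
          c * σ₁ b * (σ₁ (σ₄ k) - σ₂ (σ₃ k)) * σ₂ y,
        σ₃ c * σ₃ (σ₁ b) * σ₃ (σ₂ m) * y - b * σ₄ c * σ₄ (σ₁ m) * σ₄ (σ₂ y)) := by
  ext <;> simp only [cayMul, Prod.fst_sub, Prod.snd_sub, map_add, map_mul] <;> noncomm_ring

theorem mem_middleNucleus_cayMul_iff {c : R} {σ₁ σ₂ σ₃ σ₄ : G} {k m : R} :
    (k, m) ∈ middleNucleus (cayMul c σ₁ σ₂ σ₃ σ₄) ↔
      (∀ b, c * σ₁ b * (σ₁ (σ₄ k) - σ₂ (σ₃ k)) = 0) ∧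
      (∀ a, (c * σ₁ (σ₃ a) - a * c) * σ₁ m = 0) ∧
      (∀ b x, c * σ₁ b * σ₂ m * (x - σ₂ (σ₄ x)) = 0) ∧
      ∀ b y, σ₃ c * σ₃ (σ₁ b) * σ₃ (σ₂ m) * y = b * σ₄ c * σ₄ (σ₁ m) * σ₄ (σ₂ y) := by
  simp only [middleNucleus, Set.mem_ofPred_eq, Prod.forall,
    ← sub_eq_zero (a := cayMul _ _ _ _ _ _ _), cayMul_associator, Prod.mk_eq_zero]
  constructor
  · intro h
    refine ⟨fun b => ?_, fun a => ?_, fun b x => ?_, fun b y => sub_eq_zero.mp (h 0 b 0 y).2⟩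
    · simpa using (h 0 b 0 1).1
    · simpa using (h a 0 0 1).1
    · simpa using (h 0 b x 0).1
  · rintro ⟨hk, hσ₁σ₃, hσ₂σ₄, hsnd⟩ a b x y
    simp [hk, hσ₁σ₃, hσ₂σ₄, hsnd]

theorem mem_middleNucleus_cayMul_iff_of_noZeroDivisors [NoZeroDivisors R] {c : R} (hc : c ≠ 0)
    {σ₁ σ₂ σ₃ σ₄ : G} (hσ₁ : Function.Injective σ₁) (hσ₂ : Function.Injective σ₂) {k m : R} :
    (k, m) ∈ middleNucleus (cayMul c σ₁ σ₂ σ₃ σ₄) ↔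
      σ₁ (σ₄ k) = σ₂ (σ₃ k) ∧
      (m = 0 ∨ (∀ a, c * σ₁ (σ₃ a) = a * c) ∧ ⇑σ₂ ∘ ⇑σ₄ = id ∧
        ∀ b, σ₃ c * σ₃ (σ₁ b) * σ₃ (σ₂ m) = b * σ₄ c * σ₄ (σ₁ m)) := by
  have : Nontrivial R := nontrivial_of_ne c 0 hc
  rw [mem_middleNucleus_cayMul_iff]
  have hk : (∀ b, c * σ₁ b * (σ₁ (σ₄ k) - σ₂ (σ₃ k)) = 0) ↔ σ₁ (σ₄ k) = σ₂ (σ₃ k) :=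
    ⟨fun h => by simpa [hc, sub_eq_zero] using h 1, fun h b => by simp [h]⟩
  rw [hk]
  refine and_congr_right fun _ => ?_
  obtain rfl | hm := eq_or_ne m 0
  · simp
  have hσ₁m : σ₁ m ≠ 0 := (map_ne_zero_iff σ₁ hσ₁).mpr hm
  have hσ₂m : σ₂ m ≠ 0 := (map_ne_zero_iff σ₂ hσ₂).mpr hm
  have hfst : (∀ b x, c * σ₁ b * σ₂ m * (x - σ₂ (σ₄ x)) = 0) ↔ ⇑σ₂ ∘ ⇑σ₄ = id := by
    rw [funext_iff]
    exact ⟨fun h x => by simpa [hc, hσ₂m, sub_eq_zero, eq_comm (a := x)] using h 1 x,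
      fun h b x => by simp [show σ₂ (σ₄ x) = x from h x]⟩
  rw [hfst]
  simp only [mul_eq_zero, hσ₁m, or_false, sub_eq_zero, hm, false_or]
  refine and_congr_right fun _ => and_congr_right fun hσ₂σ₄ =>
    ⟨fun h b => by simpa using h b 1, fun h b y => ?_⟩
  have hσ₄σ₂ : σ₄ (σ₂ y) = y := hσ₂ (congrFun hσ₂σ₄ (σ₂ y))
  rw [h, hσ₄σ₂]

theorem cay_field_middle_nucleus_general [NoZeroDivisors R] {c : R} (hc : c ≠ 0)
    {σ₁ σ₂ σ₃ σ₄ : G} (hσ₁ : Function.Injective σ₁) (hσ₂ : Function.Injective σ₂)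
    (h : (∃ x, c * σ₁ (σ₃ x) ≠ x * c) ∨ ⇑σ₂ ∘ ⇑σ₄ ≠ id ∨
      ∀ v ≠ 0, ∃ x, σ₃ c * σ₃ (σ₁ x) * σ₃ (σ₂ v) ≠ x * σ₄ c * σ₄ (σ₁ v)) :
    middleNucleus (cayMul c σ₁ σ₂ σ₃ σ₄) = {k | σ₁ (σ₄ k) = σ₂ (σ₃ k)} ×ˢ {0} := by
  ext ⟨k, m⟩
  rw [mem_middleNucleus_cayMul_iff_of_noZeroDivisors hc hσ₁ hσ₂]
  refine and_congr_right fun _ => or_iff_left_of_imp ?_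
  rintro ⟨hσ₁σ₃, hσ₂σ₄, hsnd⟩
  by_contra hm
  obtain ⟨x, hx⟩ | hne | hv := h
  · exact hx (hσ₁σ₃ x)
  · exact hne hσ₂σ₄
  · obtain ⟨x, hx⟩ := hv m hm
    exact hx (hsnd x)

end CayMul

/-- Under one of the listed hypotheses, the middle nucleus of
`Cay(K,c,σ₁,σ₂,σ₃,σ₄)` is `Fix(σ₃⁻¹∘σ₂⁻¹∘σ₁∘σ₄) × {0}`. -/
theorem cay_field_middle_nucleus
    {F K : Type*} [Field F] [Field K] [Algebra F K] [FiniteDimensional F K]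
    (σ₁ σ₂ σ₃ σ₄ : K ≃ₐ[F] K) (c : K) (hc : c ≠ 0)
    (h : (∃ x : K, σ₁ (σ₃ x) ≠ x) ∨ (⇑σ₂ ∘ ⇑σ₄ ≠ id) ∨
      (∀ v : K, ∃ x : K, σ₃ c * σ₃ (σ₁ x) * σ₃ (σ₂ v) ≠ x * σ₄ c * σ₄ (σ₁ v)))
    (k m : K) :
    (∀ z w : K × K,
        cayMul c σ₁ σ₂ σ₃ σ₄ (cayMul c σ₁ σ₂ σ₃ σ₄ z (k, m)) w
          = cayMul c σ₁ σ₂ σ₃ σ₄ z (cayMul c σ₁ σ₂ σ₃ σ₄ (k, m) w)) ↔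
      (m = 0 ∧ σ₃.symm (σ₂.symm (σ₁ (σ₄ k))) = k) := by
  rw [AlgEquiv.symm_apply_eq, AlgEquiv.symm_apply_eq, and_comm]
  exact Set.ext_iff.mp (cay_field_middle_nucleus_general hc σ₁.injective σ₂.injective
    (h.imp (Exists.imp fun x hx => by rwa [mul_comm x, Ne, mul_right_inj' hc])
      (Or.imp_right fun hv v _ => hv v))) (k, m)
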